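/- arXiv:2212.01917 — 3 statements merged into one kernel-verified Lean document; each statement's English description precedes it below -/
import Mathlib

section
/- Let L be a finite group acting on a finite set X, let T be a subgroup of L, and let X' ⊆ X be a subset such that T ≤ L_x for all x ∈ X', where L_x denotes the stabilizer of x in L. Set ℒ := {L_x : x ∈ X'}, ℛ := {E ⊆ ℒ : ∩_{K∈E} K ≠ T}, and 𝒮 := {Q ⊆ X' : ∩_{x∈Q} L_x ≠ T}, where an empty intersection is taken to be L. Then Σ_{E∈ℛ} (−1)^{|E|} = Σ_{Q∈𝒮} (−1)^{|Q|}. -/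
variable {L X : Type*} [Group L] [Finite L] [Finite X] [MulAction L X]

/-- The family `ℒ = {L_x : x ∈ X'}` of stabilizers of points of `X'`. -/
def stabFam (X' : Set X) : Set (Subgroup L) :=
  (fun x => MulAction.stabilizer L x) '' X'

/-- `ℛ`: subsets `E` of `ℒ` with `∩_{K ∈ E} K ≠ T` (the empty intersection being `L`). -/
def famR (X' : Set X) (T : Subgroup L) : Set (Set (Subgroup L)) :=
  {E | E ⊆ stabFam X' ∧ sInf E ≠ T}

/-- `𝒮`: subsets `Q` of `X'` with `∩_{x ∈ Q} L_x ≠ T` (the empty intersection being `L`). -/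
def famS (X' : Set X) (T : Subgroup L) : Set (Set X) :=
  {Q | Q ⊆ X' ∧ (⨅ x ∈ Q, MulAction.stabilizer L x) ≠ T}

/-- `𝒮_E`: the elements `Q` of `𝒮` with `{L_x : x ∈ Q} = E`. -/
def famSE (X' : Set X) (T : Subgroup L) (E : Set (Subgroup L)) : Set (Set X) :=
  {Q | Q ⊆ X' ∧ (⨅ x ∈ Q, MulAction.stabilizer L x) ≠ T ∧
    (fun x => MulAction.stabilizer L x) '' Q = E}

/-!
The map `x ↦ L_x` may be replaced by any map `f`, and the condition `∩ K ≠ T` by any condition on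
the image `f(Q)`. Adjoin the points of `X'` one at a time: splitting the subsets according to
whether they contain the new point `a` expresses both sums through the smaller set. If `f a` is a
new value, the two recursions agree; if it is an old one, the sets `E` and `E \ {f a}` with
`f a ∈ E` have opposite signs and become equal once `f a` is adjoined, so the sum over the subsets
containing `a` vanishes.
-/

section AlternatingSum

variable {α β M : Type*} [AddCommGroup M]

/-- The sum `Σ_{Q ⊆ A} (-1)^{|Q|} w(Q)` over all subsets of `A`, for a weight `w` with values in an
abelian group. A condition on `Q` is encoded by a weight that vanishes where it fails. -/
def altSum (A : Finset α) (w : Finset α → M) : M :=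
  ∑ Q ∈ A.powerset, (-1 : ℤ) ^ Q.card • w Q

theorem altSum_insert [DecidableEq α] {a : α} {A : Finset α} (ha : a ∉ A) (w : Finset α → M) :
    altSum (insert a A) w = altSum A w - altSum A fun Q => w (insert a Q) := by
  have sign_flip : ∀ Q ∈ A.powerset, (-1 : ℤ) ^ (insert a Q).card • w (insert a Q) =
      -((-1 : ℤ) ^ Q.card • w (insert a Q)) := fun Q hQ => by
    rw [Finset.card_insert_of_notMem (Finset.notMem_of_mem_powerset_of_notMem hQ ha), pow_succ,
      mul_neg_one, neg_smul]
  rw [altSum, Finset.sum_powerset_insert ha, Finset.sum_congr rfl sign_flip,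
    Finset.sum_neg_distrib, ← sub_eq_add_neg, altSum, altSum]

theorem altSum_eq_zero_of_insert_eq [DecidableEq α] {a : α} {A : Finset α} (ha : a ∈ A)
    {w : Finset α → M} (hw : ∀ Q, w (insert a Q) = w Q) : altSum A w = 0 := by
  rw [← Finset.insert_erase ha, altSum_insert (Finset.notMem_erase a A)]
  simp only [hw, sub_self]

theorem altSum_comp_image [DecidableEq β] (f : α → β) (A : Finset α) (w : Finset β → M) :
    altSum A (fun Q => w (Q.image f)) = altSum (A.image f) w := by
  classical
  induction A using Finset.induction_on generalizing w with
  | empty => simp [altSum]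
  | insert a A ha ih =>
    have split_image : altSum (insert a A) (fun Q => w (Q.image f)) =
        altSum (A.image f) w - altSum (A.image f) fun E => w (insert (f a) E) := by
      simp only [altSum_insert ha, Finset.image_insert, ih w, ih fun E => w (insert (f a) E)]
    rw [split_image, Finset.image_insert]
    by_cases hfa : f a ∈ A.image f
    · have cancel : altSum (A.image f) (fun E => w (insert (f a) E)) = 0 :=
        altSum_eq_zero_of_insert_eq hfa fun E => by rw [Finset.insert_idem]
      rw [cancel, sub_zero, Finset.insert_eq_of_mem hfa]
    · rw [altSum_insert hfa]

end AlternatingSum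

theorem finsum_mem_subset_and_eq_sum_powerset_ite {α M : Type*} [AddCommMonoid M]
    (A : Finset α) (P : Set α → Prop) [DecidablePred fun Q : Finset α => P Q] (w : Set α → M) :
    ∑ᶠ Q ∈ {Q : Set α | Q ⊆ A ∧ P Q}, w Q = ∑ Q ∈ A.powerset, if P Q then w Q else 0 := by
  have coe_image_filter : {Q : Set α | Q ⊆ A ∧ P Q} =
      (fun Q : Finset α => (Q : Set α)) '' ↑(A.powerset.filter fun Q : Finset α => P Q) := by
    ext Q
    constructor
    · rintro ⟨hQA, hQ⟩
      lift Q to Finset α using A.finite_toSet.subset hQA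
      exact ⟨Q, by simpa using ⟨hQA, hQ⟩, rfl⟩
    · rintro ⟨Q, hQ, rfl⟩
      simpa using hQ
  rw [coe_image_filter, finsum_mem_image Finset.coe_injective.injOn, finsum_mem_coe_finset,
    Finset.sum_filter]

theorem finsum_mem_subset_and_neg_one_pow_ncard_eq_altSum {α : Type*} (A : Finset α)
    (P : Set α → Prop) [DecidablePred fun Q : Finset α => P Q] :
    ∑ᶠ Q ∈ {Q : Set α | Q ⊆ A ∧ P Q}, (-1 : ℤ) ^ Q.ncard =
      altSum A fun Q => if P ↑Q then 1 else 0 := by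
  simp only [finsum_mem_subset_and_eq_sum_powerset_ite, Set.ncard_coe_finset, altSum,
    smul_eq_mul, mul_ite, mul_one, mul_zero]

theorem sum_famR_eq_sum_famS_general {α β : Type*} (f : α → β) {A : Set α} (hA : A.Finite)
    (P : Set β → Prop) :
    ∑ᶠ E ∈ {E : Set β | E ⊆ f '' A ∧ P E}, (-1 : ℤ) ^ E.ncard =
      ∑ᶠ Q ∈ {Q : Set α | Q ⊆ A ∧ P (f '' Q)}, (-1 : ℤ) ^ Q.ncard := by
  classical
  lift A to Finset α using hA
  rw [← Finset.coe_image, finsum_mem_subset_and_neg_one_pow_ncard_eq_altSum,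
    finsum_mem_subset_and_neg_one_pow_ncard_eq_altSum A fun Q => P (f '' Q), ← altSum_comp_image]
  simp only [Finset.coe_image]

/-- Lemma 4.1: `Σ_{E ∈ ℛ} (−1)^{|E|} = Σ_{Q ∈ 𝒮} (−1)^{|Q|}`. -/
theorem sum_famR_eq_sum_famS (T : Subgroup L) (X' : Set X)
    (hT : ∀ x ∈ X', T ≤ MulAction.stabilizer L x) :
    (∑ᶠ E ∈ famR (L := L) X' T, ((-1 : ℤ) ^ E.ncard)) =
      ∑ᶠ Q ∈ famS (L := L) X' T, ((-1 : ℤ) ^ Q.ncard) := by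
  simpa only [famR, famS, stabFam, sInf_image] using
    sum_famR_eq_sum_famS_general (MulAction.stabilizer L) X'.toFinite (sInf · ≠ T)
end

section
/- Let V be a vector space of finite dimension over the finite field F_q and let H ≤ G ≤ GL(V) be subgroups. Then Σ_{E∈Ψ'(G,H)} (−1)^{|E|} = Σ_{X∈Ψ(G,H)} (−1)^{|X|}. -/
variable {F V : Type*} [Field F] [AddCommGroup V] [Module F V]

/-- The stabilizer in `G` of a subspace `W` of `V`: `{g ∈ G : gW = W}`. -/
def sstab (G : Subgroup (V ≃ₗ[F] V)) (W : Submodule F V) : Subgroup (V ≃ₗ[F] V) where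
  carrier := {g | g ∈ G ∧ Submodule.map (g : V →ₗ[F] V) W = W}
  one_mem' := ⟨G.one_mem, by simp⟩
  mul_mem' := by
    rintro a b ⟨ha, ha'⟩ ⟨hb, hb'⟩
    refine ⟨G.mul_mem ha hb, ?_⟩
    rw [show ((a * b : V ≃ₗ[F] V) : V →ₗ[F] V) = (a : V →ₗ[F] V).comp (b : V →ₗ[F] V) from rfl,
      Submodule.map_comp, hb', ha']
  inv_mem' := by
    rintro a ⟨ha, ha'⟩
    refine ⟨G.inv_mem ha, ?_⟩
    conv_lhs => rw [← ha']
    rw [← Submodule.map_comp]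
    rw [show ((a⁻¹ : V ≃ₗ[F] V) : V →ₗ[F] V).comp (a : V →ₗ[F] V) = LinearMap.id from by
      ext x; exact a.symm_apply_apply x]
    exact Submodule.map_id W

/-- The family `C(G,H)` of stabilizers of proper non-trivial subspaces of `V` containing `H`. -/
def Cfam (G H : Subgroup (V ≃ₗ[F] V)) : Set (Subgroup (V ≃ₗ[F] V)) :=
  {M | ∃ W : Submodule F V, W ≠ ⊥ ∧ W ≠ ⊤ ∧ H ≤ sstab G W ∧ M = sstab G W}

/-- `S(V,H)*`: the proper non-trivial `H`-invariant subspaces of `V`. -/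
def SStar (H : Subgroup (V ≃ₗ[F] V)) : Set (Submodule F V) :=
  {W | W ≠ ⊥ ∧ W ≠ ⊤ ∧ ∀ g ∈ H, Submodule.map ((g : V ≃ₗ[F] V) : V →ₗ[F] V) W = W}

/-- `Ψ(G,H)`: subsets of `C(G,H)` whose intersection (taken to be `G` when empty) is not `H`. -/
def Psi (G H : Subgroup (V ≃ₗ[F] V)) : Set (Set (Subgroup (V ≃ₗ[F] V))) :=
  {X | X ⊆ Cfam G H ∧ G ⊓ sInf X ≠ H}

/-- `Ψ(G,H)ᶜ`: non-empty subsets of `C(G,H)` whose intersection is exactly `H`. -/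
def PsiC (G H : Subgroup (V ≃ₗ[F] V)) : Set (Set (Subgroup (V ≃ₗ[F] V))) :=
  {Y | Y ⊆ Cfam G H ∧ Y ≠ ∅ ∧ G ⊓ sInf Y = H}

/-- `Ψ'(G,H)`: subsets `E` of `S(V,H)*` with `∩_{W ∈ E} stab_G(W) ≠ H`
(the empty intersection being `G`). -/
def Psi' (G H : Subgroup (V ≃ₗ[F] V)) : Set (Set (Submodule F V)) :=
  {E | E ⊆ SStar H ∧ (G ⊓ ⨅ W ∈ E, sstab G W) ≠ H}

/-- The reducible subgroup ideal `I(G,H)`. -/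
def redIdeal (G H : Subgroup (V ≃ₗ[F] V)) : Set (Subgroup (V ≃ₗ[F] V)) :=
  {K | ∃ M ∈ Cfam G H, H ≤ K ∧ K ≤ M}

/-- The poset `Î(G,H) = I(G,H) ∪ {H, G}`. -/
def Ihat (G H : Subgroup (V ≃ₗ[F] V)) : Set (Subgroup (V ≃ₗ[F] V)) :=
  redIdeal G H ∪ {H, G}

/-- A subgroup `K ≤ GL(V)` is irreducible if the only `K`-invariant subspaces are `0` and `V`. -/
def IsIrred (K : Subgroup (V ≃ₗ[F] V)) : Prop :=
  ∀ W : Submodule F V, (∀ g ∈ K, Submodule.map ((g : V ≃ₗ[F] V) : V →ₗ[F] V) W = W) →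
    W = ⊥ ∨ W = ⊤

/-- `mu` is the Möbius function of the subposet of the subgroup lattice given by `S`,
ordered by inclusion: `mu x y = 0` unless `x ≤ y`, `mu x x = 1`, and
`∑_{x ≤ t ≤ y} mu x t = 0` whenever `x < y` (all elements ranging in `S`). -/
def IsMobius (S : Set (Subgroup (V ≃ₗ[F] V)))
    (mu : Subgroup (V ≃ₗ[F] V) → Subgroup (V ≃ₗ[F] V) → ℤ) : Prop :=
  (∀ x ∈ S, ∀ y ∈ S, ¬x ≤ y → mu x y = 0) ∧
  (∀ x ∈ S, mu x x = 1) ∧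
  (∀ x ∈ S, ∀ y ∈ S, x < y → (∑ᶠ t ∈ {t | t ∈ S ∧ x ≤ t ∧ t ≤ y}, mu x t) = 0)

/-!
Grouping the sets `E` of subspaces by their image `X` under `W ↦ stab_G(W)`, the condition defining
`Ψ'(G,H)` depends on `X` only, so it suffices that the signs of the `E ⊆ S` with a given image
`X ⊆ f(S)` add up to `(-1)^|X|`, for any map `f` on a finite set `S`. Weighting by an arbitrary
function `g` of the image makes this an induction on `S`: adding to `S` a point `a` with `f a`
already in `f(S)` contributes nothing, since toggling membership of `f a` in `X` flips the sign of
`X` and preserves `g (X ∪ {f a})`.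
-/

section AlternatingSums

open Finset

variable {α β M : Type*}

theorem sum_powerset_insert_neg_one_pow_card_smul [DecidableEq α] [AddCommGroup M]
    {S : Finset α} {a : α} (ha : a ∉ S) (g : Finset α → M) :
    ∑ E ∈ (insert a S).powerset, (-1 : ℤ) ^ #E • g E =
      ∑ E ∈ S.powerset, (-1 : ℤ) ^ #E • g E -
        ∑ E ∈ S.powerset, (-1 : ℤ) ^ #E • g (insert a E) := by
  rw [sum_powerset_insert ha, sub_eq_add_neg, ← sum_neg_distrib]
  refine congrArg _ (sum_congr rfl fun E hE => ?_)
  have haE : a ∉ E := notMem_of_mem_powerset_of_notMem hE ha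
  rw [card_insert_of_notMem haE, pow_succ, mul_neg_one, neg_smul]

theorem sum_powerset_neg_one_pow_card_smul_insert_eq_zero [DecidableEq α] [AddCommGroup M]
    {S : Finset α} {a : α} (ha : a ∈ S) (g : Finset α → M) :
    ∑ E ∈ S.powerset, (-1 : ℤ) ^ #E • g (insert a E) = 0 := by
  rw [← insert_erase ha, sum_powerset_insert_neg_one_pow_card_smul (notMem_erase a S)
    fun E => g (insert a E)]
  simp only [insert_idem, sub_self]

theorem sum_powerset_neg_one_pow_card_smul_image [DecidableEq β] [AddCommGroup M]
    (f : α → β) (S : Finset α) (g : Finset β → M) :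
    ∑ E ∈ S.powerset, (-1 : ℤ) ^ #E • g (E.image f) =
      ∑ X ∈ (S.image f).powerset, (-1 : ℤ) ^ #X • g X := by
  classical
  induction S using Finset.induction_on generalizing g with
  | empty => simp
  | insert a S ha ih =>
    have sum_insert_image :
        ∑ E ∈ (insert a S).powerset, (-1 : ℤ) ^ #E • g (E.image f) =
          ∑ X ∈ (S.image f).powerset, (-1 : ℤ) ^ #X • g X -
            ∑ X ∈ (S.image f).powerset, (-1 : ℤ) ^ #X • g (insert (f a) X) := by
      rw [sum_powerset_insert_neg_one_pow_card_smul ha fun E => g (E.image f)]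
      simp only [image_insert]
      rw [ih, ih fun X => g (insert (f a) X)]
    rw [sum_insert_image, image_insert]
    by_cases hfa : f a ∈ S.image f
    · rw [sum_powerset_neg_one_pow_card_smul_insert_eq_zero hfa, sub_zero, insert_eq_of_mem hfa]
    · rw [sum_powerset_insert_neg_one_pow_card_smul hfa]

theorem finsum_mem_subset_and_eq_sum_filter_powerset [AddCommMonoid M] (S : Finset α)
    (P : Set α → Prop) [DecidablePred fun E : Finset α => P E] (g : Set α → M) :
    ∑ᶠ E ∈ {E : Set α | E ⊆ S ∧ P E}, g E = ∑ E ∈ S.powerset with P (E : Finset α), g E := by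
  have setOf_eq_image : {E : Set α | E ⊆ S ∧ P E} =
      (fun E : Finset α => (E : Set α)) '' ↑({E ∈ S.powerset | P E} : Finset (Finset α)) := by
    ext E
    constructor
    · rintro ⟨hES, hPE⟩
      lift E to Finset α using S.finite_toSet.subset hES
      exact ⟨E, by simpa using ⟨hES, hPE⟩, rfl⟩
    · rintro ⟨E, hE, rfl⟩
      simpa using hE
  rw [setOf_eq_image, finsum_mem_image coe_injective.injOn, finsum_mem_coe_finset]

theorem finsum_mem_neg_one_pow_ncard_image (f : α → β) {S : Set α} (hS : S.Finite)
    (P : Set β → Prop) :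
    ∑ᶠ E ∈ {E | E ⊆ S ∧ P (f '' E)}, (-1 : ℤ) ^ E.ncard =
      ∑ᶠ X ∈ {X | X ⊆ f '' S ∧ P X}, (-1 : ℤ) ^ X.ncard := by
  classical
  lift S to Finset α using hS
  rw [finsum_mem_subset_and_eq_sum_filter_powerset S fun E => P (f '' E), ← coe_image,
    finsum_mem_subset_and_eq_sum_filter_powerset (S.image f) P, sum_filter, sum_filter]
  simpa using sum_powerset_neg_one_pow_card_smul_image f S
    fun X => if P (X : Set β) then (1 : ℤ) else 0

end AlternatingSums

section Stabilizers

variable {G H : Subgroup (V ≃ₗ[F] V)}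

theorem le_sstab_iff (hHG : H ≤ G) {W : Submodule F V} :
    H ≤ sstab G W ↔ ∀ g ∈ H, Submodule.map (g : V →ₗ[F] V) W = W :=
  ⟨fun h _ hg => (h hg).2, fun h g hg => ⟨hHG hg, h g hg⟩⟩

theorem Cfam_eq_image_SStar (hHG : H ≤ G) : Cfam G H = sstab G '' SStar H := by
  ext M
  simp only [Cfam, SStar, Set.mem_image, Set.mem_ofPred_eq, le_sstab_iff hHG, and_assoc,
    eq_comm (a := M)]

theorem Psi_eq_setOf_subset_image (hHG : H ≤ G) :
    Psi G H = {X | X ⊆ sstab G '' SStar H ∧ G ⊓ sInf X ≠ H} := by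
  rw [Psi, Cfam_eq_image_SStar hHG]

theorem Psi'_eq_setOf_sInf_image (G H : Subgroup (V ≃ₗ[F] V)) :
    Psi' G H = {E | E ⊆ SStar H ∧ G ⊓ sInf (sstab G '' E) ≠ H} := by
  simp only [Psi', sInf_image]

theorem sum_Psi'_eq_sum_Psi_general (hHG : H ≤ G) (hS : (SStar H).Finite) :
    ∑ᶠ E ∈ Psi' G H, (-1 : ℤ) ^ E.ncard = ∑ᶠ X ∈ Psi G H, (-1 : ℤ) ^ X.ncard := by
  rw [Psi'_eq_setOf_sInf_image, Psi_eq_setOf_subset_image hHG]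
  exact finsum_mem_neg_one_pow_ncard_image (sstab G) hS fun X => G ⊓ sInf X ≠ H

end Stabilizers

/-- Proposition 4.2: `Σ_{E ∈ Ψ'(G,H)} (−1)^{|E|} = Σ_{X ∈ Ψ(G,H)} (−1)^{|X|}`. -/
theorem sum_Psi'_eq_sum_Psi [Fintype F] [FiniteDimensional F V]
    (G H : Subgroup (V ≃ₗ[F] V)) (hHG : H ≤ G) :
    (∑ᶠ E ∈ Psi' G H, ((-1 : ℤ) ^ E.ncard)) = ∑ᶠ X ∈ Psi G H, ((-1 : ℤ) ^ X.ncard) := by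
  have : Finite V := Module.finite_of_finite F
  exact sum_Psi'_eq_sum_Psi_general hHG (Set.toFinite _)
end

section
/- Let V be a vector space of finite dimension over the finite field F_q, let G ≤ GL(V) be an irreducible subgroup, and let H ≤ G be a reducible subgroup. Then μ_{Î(G,H)}(H,G) = Σ_{Y∈Ψ(G,H)^∁} (−1)^{|Y|}. -/
variable {F V : Type*} [Field F] [AddCommGroup V] [Module F V]

/-!
Every subgroup of `I(G,H)` lies in an interval `[H, M]` with `M ∈ C(G,H)`, and intervals with the
same minimum intersect by the rule `⋂_{M ∈ Y} [H, M] = [H, ⋂ Y]`. Inclusion–exclusion therefore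
expresses `∑_{t ∈ I(G,H)} μ(H,t)` through the sums of `μ(H,·)` over the intervals `[H, ⋂ Y]`, and
such a sum is `1` if `⋂ Y = H` and `0` otherwise. As `G` is irreducible it lies outside `I(G,H)`,
so the defining recursion gives `μ(H,G) = -∑_{t ∈ I(G,H)} μ(H,t)`.
-/

open Set

theorem finsum_mem_biUnion_eq_inclusion_exclusion {ι α A : Type*} [AddCommGroup A] {C : Set ι}
    (hC : C.Finite) {s : ι → Set α} (hs : ∀ i ∈ C, (s i).Finite) (f : α → A) :
    ∑ᶠ t ∈ ⋃ i ∈ C, s i, f t =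
      ∑ᶠ Y ∈ {Y | Y ⊆ C ∧ Y.Nonempty}, (-1 : ℤ) ^ (Y.ncard + 1) • ∑ᶠ t ∈ ⋂ i ∈ Y, s i, f t := by
  classical
  lift C to Finset ι using hC
  choose! S hS using fun i hi ↦ (hs i hi).exists_finset_coe
  have coe_biUnion : ⋃ i ∈ (C : Set ι), s i = ↑(C.biUnion S) := by
    rw [Finset.coe_biUnion]
    exact iUnion₂_congr fun i hi ↦ (hS i hi).symm
  have coe_inf' (Y : Finset ι) (hYC : Y ⊆ C) (hY : Y.Nonempty) :
      ⋂ i ∈ (Y : Set ι), s i = ↑(Y.inf' hY S) := by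
    ext t
    simp only [mem_iInter₂, Finset.mem_coe, Finset.mem_inf']
    exact forall₂_congr fun i hi ↦ by rw [← hS i (hYC hi), Finset.mem_coe]
  have index_eq : {Y : Set ι | Y ⊆ C ∧ Y.Nonempty} =
      (↑) '' (↑(C.powerset.filter (·.Nonempty)) : Set (Finset ι)) := by
    ext Y
    constructor
    · rintro ⟨hYC, hY⟩
      lift Y to Finset ι using C.finite_toSet.subset hYC
      exact ⟨Y, by simpa using ⟨hYC, hY⟩, rfl⟩
    · rintro ⟨Y, hY, rfl⟩
      simpa using hY
  rw [coe_biUnion, finsum_mem_coe_finset, Finset.inclusion_exclusion_sum_biUnion, index_eq,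
    finsum_mem_image Finset.coe_injective.injOn, finsum_mem_coe_finset,
    ← Finset.sum_coe_sort (C.powerset.filter (·.Nonempty))]
  refine Finset.sum_congr rfl fun Y _ ↦ ?_
  obtain ⟨hYC, hY⟩ := Finset.mem_filter.1 Y.2
  rw [coe_inf' Y (Finset.mem_powerset.1 hYC) hY, finsum_mem_coe_finset, ncard_coe_finset]

section CompleteLattice

variable {α : Type*} [CompleteLattice α] {a : α}

theorem biInter_Icc_eq_Icc_sInf {Y : Set α} (hY : Y.Nonempty) :
    ⋂ y ∈ Y, Icc a y = Icc a (sInf Y) := by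
  ext t
  simp only [mem_iInter₂, mem_Icc, le_sInf_iff]
  obtain ⟨y, hy⟩ := hY
  exact ⟨fun h ↦ ⟨(h y hy).1, fun z hz ↦ (h z hz).2⟩, fun h z hz ↦ ⟨h.1, h.2 z hz⟩⟩

theorem finsum_mem_biUnion_Icc_eq_finsum_sInf_eq {A : Type*} [AddCommGroup A] {C : Set α}
    (hC : C.Finite) (hCfin : ∀ c ∈ C, (Icc a c).Finite) {f : α → A}
    (hf : ∀ c ∈ C, ∀ y ∈ Ioc a c, ∑ᶠ t ∈ Icc a y, f t = 0) :
    ∑ᶠ t ∈ ⋃ c ∈ C, Icc a c, f t =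
      ∑ᶠ Y ∈ {Y | Y ⊆ C ∧ Y.Nonempty ∧ sInf Y = a}, (-1 : ℤ) ^ (Y.ncard + 1) • f a := by
  have interval_sum_eq_zero (Y : Set α) (hYC : Y ⊆ C) (hY : Y.Nonempty) (hYa : sInf Y ≠ a) :
      ∑ᶠ t ∈ Icc a (sInf Y), f t = 0 := by
    by_cases haY : a ≤ sInf Y
    · obtain ⟨c, hc⟩ := hY
      exact hf c (hYC hc) _ ⟨lt_of_le_of_ne' haY hYa, sInf_le hc⟩
    · rw [Icc_eq_empty haY, finsum_mem_empty]
  calc ∑ᶠ t ∈ ⋃ c ∈ C, Icc a c, f t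
      = ∑ᶠ Y ∈ {Y | Y ⊆ C ∧ Y.Nonempty},
          (-1 : ℤ) ^ (Y.ncard + 1) • ∑ᶠ t ∈ Icc a (sInf Y), f t := by
        rw [finsum_mem_biUnion_eq_inclusion_exclusion hC hCfin]
        exact finsum_mem_congr rfl fun Y hY ↦ by rw [biInter_Icc_eq_Icc_sInf hY.2]
    _ = ∑ᶠ Y ∈ {Y | Y ⊆ C ∧ Y.Nonempty ∧ sInf Y = a},
          (-1 : ℤ) ^ (Y.ncard + 1) • ∑ᶠ t ∈ Icc a (sInf Y), f t := by
        refine finsum_mem_inter_support_eq' _ _ _ fun Y hsupp ↦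
          ⟨fun ⟨hYC, hY⟩ ↦ ⟨hYC, hY, ?_⟩, fun hY ↦ ⟨hY.1, hY.2.1⟩⟩
        by_contra hYa
        exact hsupp (smul_eq_zero_of_right _ (interval_sum_eq_zero Y hYC hY hYa))
    _ = ∑ᶠ Y ∈ {Y | Y ⊆ C ∧ Y.Nonempty ∧ sInf Y = a}, (-1 : ℤ) ^ (Y.ncard + 1) • f a :=
        finsum_mem_congr rfl fun Y hY ↦ by rw [hY.2.2, Icc_self, finsum_mem_singleton]

end CompleteLattice

section ReducibleIdeal

variable {G H K M : Subgroup (V ≃ₗ[F] V)}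

theorem sstab_le (G : Subgroup (V ≃ₗ[F] V)) (W : Submodule F V) : sstab G W ≤ G :=
  fun _ hg ↦ hg.1

theorem le_of_mem_Cfam (hM : M ∈ Cfam G H) : H ≤ M := by
  obtain ⟨W, -, -, hHW, rfl⟩ := hM
  exact hHW

theorem le_right_of_mem_Cfam (hM : M ∈ Cfam G H) : M ≤ G := by
  obtain ⟨W, -, -, -, rfl⟩ := hM
  exact sstab_le G W

theorem Cfam_subset_redIdeal : Cfam G H ⊆ redIdeal G H :=
  fun M hM ↦ ⟨M, hM, le_of_mem_Cfam hM, le_rfl⟩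

theorem redIdeal_eq_biUnion_Icc : redIdeal G H = ⋃ M ∈ Cfam G H, Icc H M := by
  ext K
  simp only [redIdeal, mem_ofPred_eq, mem_iUnion₂, mem_Icc, exists_prop]

theorem redIdeal_subset_Icc : redIdeal G H ⊆ Icc H G := by
  rintro K ⟨M, hM, hHK, hKM⟩
  exact ⟨hHK, hKM.trans (le_right_of_mem_Cfam hM)⟩

theorem Icc_subset_redIdeal (hK : K ∈ redIdeal G H) : Icc H K ⊆ redIdeal G H := by
  obtain ⟨M, hM, -, hKM⟩ := hK
  exact fun L hL ↦ ⟨M, hM, hL.1, hL.2.trans hKM⟩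

theorem IsIrred.notMem_redIdeal (hG : IsIrred G) : G ∉ redIdeal G H := by
  rintro ⟨_, ⟨W, hW_bot, hW_top, -, rfl⟩, -, hGW⟩
  exact (hG W fun g hg ↦ (hGW hg).2).elim hW_bot hW_top

theorem mem_redIdeal_of_not_isIrred (hHG : H ≤ G) (hH : ¬IsIrred H) : H ∈ redIdeal G H := by
  simp only [IsIrred, not_forall, not_or] at hH
  obtain ⟨W, hHW, hW_bot, hW_top⟩ := hH
  have hH_le : H ≤ sstab G W := fun g hg ↦ ⟨hHG hg, hHW g hg⟩
  exact ⟨sstab G W, ⟨W, hW_bot, hW_top, hH_le, rfl⟩, le_rfl, hH_le⟩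

theorem Ihat_eq_insert_redIdeal (hH : H ∈ redIdeal G H) : Ihat G H = insert G (redIdeal G H) := by
  rw [Ihat, union_insert, union_singleton, insert_comm, insert_eq_of_mem hH]

theorem PsiC_eq_setOf_sInf_eq :
    PsiC G H = {Y | Y ⊆ Cfam G H ∧ Y.Nonempty ∧ sInf Y = H} := by
  ext Y
  refine and_congr_right fun hYC ↦ ?_
  rw [← nonempty_iff_ne_empty]
  refine and_congr_right fun ⟨M, hM⟩ ↦ ?_
  rw [inf_eq_right.2 ((sInf_le hM).trans (le_right_of_mem_Cfam (hYC hM)))]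

variable {mu : Subgroup (V ≃ₗ[F] V) → Subgroup (V ≃ₗ[F] V) → ℤ}

theorem IsMobius.finsum_Icc_eq_zero (hmu : IsMobius (Ihat G H) mu) (hH : H ∈ redIdeal G H)
    (hK : K ∈ redIdeal G H) (hHK : H < K) : ∑ᶠ t ∈ Icc H K, mu H t = 0 := by
  have interval_eq : {t | t ∈ Ihat G H ∧ H ≤ t ∧ t ≤ K} = Icc H K :=
    inter_eq_right.2 fun t ht ↦ Or.inl (Icc_subset_redIdeal hK ht)
  rw [← interval_eq]
  exact hmu.2.2 H (Or.inl hH) K (Or.inl hK) hHK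

theorem IsMobius.apply_eq_neg_finsum_redIdeal (hmu : IsMobius (Ihat G H) mu) (hG : IsIrred G)
    (hH : H ∈ redIdeal G H) (hfin : (redIdeal G H).Finite) :
    mu H G = -∑ᶠ t ∈ redIdeal G H, mu H t := by
  have hHG : H ≤ G := (redIdeal_subset_Icc hH).2
  have hne : H ≠ G := fun h ↦ hG.notMem_redIdeal (h ▸ hH)
  have Ihat_subset : Ihat G H ⊆ Icc H G := by
    rw [Ihat_eq_insert_redIdeal hH]
    exact insert_subset (right_mem_Icc.2 hHG) redIdeal_subset_Icc
  have interval_eq : {t | t ∈ Ihat G H ∧ H ≤ t ∧ t ≤ G} = insert G (redIdeal G H) :=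
    (inter_eq_left.2 Ihat_subset).trans (Ihat_eq_insert_redIdeal hH)
  have recursion := hmu.2.2 H (Or.inl hH) G (Or.inr (by simp)) (lt_of_le_of_ne hHG hne)
  rw [interval_eq, finsum_mem_insert _ hG.notMem_redIdeal hfin] at recursion
  exact eq_neg_of_add_eq_zero_left recursion

end ReducibleIdeal

theorem mobius_Ihat_eq_sum_PsiC_general {G H : Subgroup (V ≃ₗ[F] V)} (hfin : (Ihat G H).Finite)
    (hHG : H ≤ G) (hGirr : IsIrred G) (hHred : ¬IsIrred H)
    {mu : Subgroup (V ≃ₗ[F] V) → Subgroup (V ≃ₗ[F] V) → ℤ} (hmu : IsMobius (Ihat G H) mu) :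
    mu H G = ∑ᶠ Y ∈ PsiC G H, (-1 : ℤ) ^ Y.ncard := by
  have hI : (redIdeal G H).Finite := hfin.subset subset_union_left
  have hC : (Cfam G H).Finite := hI.subset Cfam_subset_redIdeal
  have hIcc (M) (hM : M ∈ Cfam G H) : Icc H M ⊆ redIdeal G H :=
    Icc_subset_redIdeal (Cfam_subset_redIdeal hM)
  have hH : H ∈ redIdeal G H := mem_redIdeal_of_not_isIrred hHG hHred
  have hmu_H : mu H H = 1 := hmu.2.1 H (Or.inl hH)
  have hPsiC : (PsiC G H).Finite := hC.finite_subsets.subset fun _ hY ↦ hY.1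
  calc mu H G
      = -∑ᶠ t ∈ ⋃ M ∈ Cfam G H, Icc H M, mu H t := by
        rw [hmu.apply_eq_neg_finsum_redIdeal hGirr hH hI, redIdeal_eq_biUnion_Icc]
    _ = -∑ᶠ Y ∈ PsiC G H, (-1 : ℤ) ^ (Y.ncard + 1) • mu H H := by
        rw [PsiC_eq_setOf_sInf_eq, finsum_mem_biUnion_Icc_eq_finsum_sInf_eq hC
          (fun M hM ↦ hI.subset (hIcc M hM)) fun M hM K hK ↦
            hmu.finsum_Icc_eq_zero hH (hIcc M hM (Ioc_subset_Icc_self hK)) hK.1]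
    _ = ∑ᶠ Y ∈ PsiC G H, (-1 : ℤ) ^ Y.ncard := by
        simp only [← finsum_mem_neg_distrib _ hPsiC, hmu_H, pow_succ, smul_eq_mul, mul_one,
          mul_neg, neg_neg]

/-- Proposition 4.4: `μ_{Î(G,H)}(H,G) = Σ_{Y ∈ Ψ(G,H)^∁} (−1)^{|Y|}`. -/
theorem mobius_Ihat_eq_sum_PsiC [Fintype F] [FiniteDimensional F V]
    (G H : Subgroup (V ≃ₗ[F] V)) (hHG : H ≤ G) (hGirr : IsIrred G) (hHred : ¬IsIrred H)
    (mu : Subgroup (V ≃ₗ[F] V) → Subgroup (V ≃ₗ[F] V) → ℤ) (hmu : IsMobius (Ihat G H) mu) :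
    mu H G = ∑ᶠ Y ∈ PsiC G H, ((-1 : ℤ) ^ Y.ncard) := by
  have : Finite V := Module.finite_of_finite F
  have : Finite (V ≃ₗ[F] V) := DFunLike.finite _
  exact mobius_Ihat_eq_sum_PsiC_general (toFinite _) hHG hGirr hHred hmu
end
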